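/- For integers k ≥ 1 and 1 ≤ a ≤ k: Σ_{n≥0} U_{2k,2a}(n) q^n = (−q;q)_∞ (q^{2a}, q^{4k−2a}, q^{4k}; q^{4k})_∞ / (q^2;q^2)_∞, where U_{2k,2a}(n) counts overpartitions of n satisfying f_1 ≤ 2a−1+f_{1̄}, f_{2l−1} ≥ f_{\overline{2l−1}}, f_{2l}+f_{\overline{2l}} ≡ 0 (mod 2), and f_l + f_{l̄} + f_{l+1} ≤ 2k−1+f_{\overline{l+1}} for all l ≥ 1. -/

import Mathlib

/-- An overpartition recorded by a pair of multiplicity functions: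
`p.1 i` is the number of non-overlined occurrences of the part `i` and
`p.2 i ∈ {0, 1}` is the number of overlined occurrences of `i`.
There are no parts equal to `0`. -/
def IsOverPtn (p : (ℕ →₀ ℕ) × (ℕ →₀ ℕ)) : Prop :=
  p.1 0 = 0 ∧ p.2 0 = 0 ∧ ∀ i, p.2 i ≤ 1

/-- The number of parts of an overpartition. -/
def opParts (p : (ℕ →₀ ℕ) × (ℕ →₀ ℕ)) : ℕ :=
  (p.1.sum fun _ v => v) + (p.2.sum fun _ v => v)

/-- The weight (number partitioned) of an overpartition. -/
def opWt (p : (ℕ →₀ ℕ) × (ℕ →₀ ℕ)) : ℕ :=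
  (p.1.sum fun i v => i * v) + (p.2.sum fun i v => i * v)

/-- Conditions (i)-(iv) of Definition 1.6 (Kursungoz–Zadehdabbagh), with modulus `d`,
first index `N = dk + e` and second index `M = da + f`: writing `f_i = p.1 i`,
`f_{ī} = p.2 i`,
(i) `f_1 ≤ M - 1 + (d-1) f_{1̄}`;
(ii) `f_{2l-1} ≥ (d-1) f_{\overline{2l-1}}`;
(iii) `f_{2l} + f_{\overline{2l}} ≡ 0 (mod d)`;
(iv) `f_l + f_{l̄} + f_{l+1} ≤ N - 1 + (d-1) f_{\overline{l+1}}` for all `l ≥ 1`. -/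
def uCond (d N M : ℕ) (p : (ℕ →₀ ℕ) × (ℕ →₀ ℕ)) : Prop :=
  p.1 1 + 1 ≤ M + (d - 1) * p.2 1 ∧
  (∀ l : ℕ, (d - 1) * p.2 (2 * l + 1) ≤ p.1 (2 * l + 1)) ∧
  (∀ l : ℕ, d ∣ p.1 (2 * l + 2) + p.2 (2 * l + 2)) ∧
  (∀ l : ℕ, 1 ≤ l → p.1 l + p.2 l + p.1 (l + 1) + 1 ≤ N + (d - 1) * p.2 (l + 1))

/-- Conditions (ī)-(iv̄): as `uCond` with the parity roles of odd and even parts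
swapped in the second and third conditions. -/
def ubarCond (d N M : ℕ) (p : (ℕ →₀ ℕ) × (ℕ →₀ ℕ)) : Prop :=
  p.1 1 + 1 ≤ M + (d - 1) * p.2 1 ∧
  (∀ l : ℕ, (d - 1) * p.2 (2 * l + 2) ≤ p.1 (2 * l + 2)) ∧
  (∀ l : ℕ, d ∣ p.1 (2 * l + 1) + p.2 (2 * l + 1)) ∧
  (∀ l : ℕ, 1 ≤ l → p.1 l + p.2 l + p.1 (l + 1) + 1 ≤ N + (d - 1) * p.2 (l + 1))

/-- `u_{N, M}(m, n)`: the number of overpartitions of `n` into `m` parts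
satisfying conditions (i)-(iv). -/
noncomputable def uCount (d N M m n : ℕ) : ℕ :=
  Set.ncard {p : (ℕ →₀ ℕ) × (ℕ →₀ ℕ) |
    IsOverPtn p ∧ opParts p = m ∧ opWt p = n ∧ uCond d N M p}

/-- `ū_{N, M}(m, n)`: the number of overpartitions of `n` into `m` parts
satisfying conditions (ī)-(iv̄). -/
noncomputable def ubarCount (d N M m n : ℕ) : ℕ :=
  Set.ncard {p : (ℕ →₀ ℕ) × (ℕ →₀ ℕ) |
    IsOverPtn p ∧ opParts p = m ∧ opWt p = n ∧ ubarCond d N M p}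

/-- The two-variable generating function `U_{N,M}(x) = Σ u_{N,M}(m,n) x^m q^n`. -/
noncomputable def Ugf (d N M : ℕ) (x q : ℂ) : ℂ :=
  ∑' mn : ℕ × ℕ, (uCount d N M mn.1 mn.2 : ℂ) * x ^ mn.1 * q ^ mn.2

/-- The two-variable generating function `Ū_{N,M}(x) = Σ ū_{N,M}(m,n) x^m q^n`. -/
noncomputable def UbarGf (d N M : ℕ) (x q : ℂ) : ℂ :=
  ∑' mn : ℕ × ℕ, (ubarCount d N M mn.1 mn.2 : ℂ) * x ^ mn.1 * q ^ mn.2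

/-- The infinite q-Pochhammer symbol `(a; q)_∞ = ∏_{j ≥ 0} (1 - a q^j)`. -/
noncomputable def qPochInf (a q : ℂ) : ℂ := ∏' j : ℕ, (1 - a * q ^ j)

/-- The finite q-Pochhammer symbol `(a; q)_n = ∏_{j=0}^{n-1} (1 - a q^j)`. -/
noncomputable def qPochFin (a q : ℂ) (n : ℕ) : ℂ := ∏ j ∈ Finset.range n, (1 - a * q ^ j)


section

open Filter Topology

section QPochhammer

variable {q : ℂ}

lemma summable_norm_mul_pow (hq : ‖q‖ < 1) (a : ℂ) : Summable fun j : ℕ => ‖-(a * q ^ j)‖ := by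
  simpa [norm_mul, norm_pow] using (summable_geometric_of_lt_one (norm_nonneg q) hq).mul_left ‖a‖

lemma multipliable_qPochInf (hq : ‖q‖ < 1) (a : ℂ) : Multipliable fun j : ℕ => 1 - a * q ^ j := by
  simpa only [sub_eq_add_neg] using multipliable_one_add_of_summable (summable_norm_mul_pow hq a)

lemma tendsto_qPochFin (hq : ‖q‖ < 1) (a : ℂ) :
    Tendsto (qPochFin a q) atTop (𝓝 (qPochInf a q)) :=
  (multipliable_qPochInf hq a).hasProd.tendsto_prod_nat

lemma one_sub_mul_pow_ne_zero (hq : ‖q‖ < 1) {a : ℂ} (ha : ‖a‖ < 1) (j : ℕ) :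
    1 - a * q ^ j ≠ 0 := by
  intro h
  have h1 : ‖a * q ^ j‖ = 1 := by rw [← sub_eq_zero.mp h, norm_one]
  rw [norm_mul, norm_pow] at h1
  nlinarith [pow_le_one₀ (n := j) (norm_nonneg q) hq.le, norm_nonneg a, norm_nonneg q,
    pow_nonneg (norm_nonneg q) j]

lemma qPochInf_ne_zero (hq : ‖q‖ < 1) {a : ℂ} (ha : ‖a‖ < 1) : qPochInf a q ≠ 0 := by
  have := tprod_one_add_ne_zero_of_summable (f := fun j : ℕ => -(a * q ^ j))
    (fun j => by simpa [sub_eq_add_neg] using one_sub_mul_pow_ne_zero hq ha j)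
    (summable_norm_mul_pow hq a)
  simpa only [qPochInf, sub_eq_add_neg] using this

lemma qPochFin_ne_zero (hq : ‖q‖ < 1) {a : ℂ} (ha : ‖a‖ < 1) (n : ℕ) : qPochFin a q n ≠ 0 :=
  Finset.prod_ne_zero_iff.mpr fun j _ => one_sub_mul_pow_ne_zero hq ha j

lemma qPochFin_succ (a : ℂ) (n : ℕ) :
    qPochFin a q (n + 1) = qPochFin a q n * (1 - a * q ^ n) :=
  Finset.prod_range_succ _ _

lemma Filter.Tendsto.exists_norm_le {u : ℕ → ℂ} {l : ℂ} (h : Tendsto u atTop (𝓝 l)) :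
    ∃ K : ℝ, ∀ n, ‖u n‖ ≤ K := by
  obtain ⟨K, hK⟩ := (Metric.isBounded_range_of_tendsto u h).exists_norm_le
  exact ⟨K, fun n => hK _ ⟨n, rfl⟩⟩

end QPochhammer

section JacobiTripleProduct

variable {p : ℂ}

/-- `1 / (p; p)_m`, extended by zero to negative `m`. -/
noncomputable def qFactInv (p : ℂ) (m : ℤ) : ℂ :=
  if m < 0 then 0 else (qPochFin p p m.toNat)⁻¹

lemma qFactInv_pred (hp : ‖p‖ < 1) (m : ℤ) :
    qFactInv p (m - 1) = (1 - p ^ m) * qFactInv p m := by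
  rcases lt_trichotomy m 0 with h | rfl | h
  · rw [qFactInv, qFactInv, if_pos h, if_pos (by omega), mul_zero]
  · simp [qFactInv]
  · obtain ⟨n, rfl⟩ : ∃ n : ℕ, m = n + 1 := ⟨(m - 1).toNat, by omega⟩
    have h1 : ((n : ℤ) + 1).toNat = n + 1 := by omega
    have h2 : ¬ ((n : ℤ) + 1 < 0) := by omega
    have h3 : ¬ ((n : ℤ) < 0) := by omega
    have h4 := one_sub_mul_pow_ne_zero hp hp n
    have h5 := qPochFin_ne_zero hp hp n
    have h6 : p ^ ((n : ℤ) + 1) = p * p ^ n := by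
      rw [← Nat.cast_succ, zpow_natCast, pow_succ']
    rw [add_sub_cancel_right, qFactInv, qFactInv, if_neg h2, if_neg h3, h1, Int.toNat_natCast,
      qPochFin_succ, h6]
    field_simp

lemma exists_norm_qFactInv_le (hp : ‖p‖ < 1) : ∃ K : ℝ, ∀ m, ‖qFactInv p m‖ ≤ K := by
  obtain ⟨K, hK⟩ := ((tendsto_qPochFin hp p).inv₀ (qPochInf_ne_zero hp hp)).exists_norm_le
  refine ⟨K, fun m => ?_⟩
  unfold qFactInv
  split_ifs
  · simpa using (norm_nonneg _).trans (hK 0)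
  · exact hK _

lemma tendsto_qFactInv (hp : ‖p‖ < 1) :
    Tendsto (qFactInv p) atTop (𝓝 (qPochInf p p)⁻¹) := by
  have h1 : Tendsto (fun m : ℤ => (qPochFin p p m.toNat)⁻¹) atTop (𝓝 (qPochInf p p)⁻¹) :=
    ((tendsto_qPochFin hp p).inv₀ (qPochInf_ne_zero hp hp)).comp
      (tendsto_atTop.mpr fun n => (eventually_ge_atTop (n : ℤ)).mono fun m hm => by omega)
  refine h1.congr' ((eventually_ge_atTop 0).mono fun m hm => ?_)
  rw [qFactInv, if_neg (by omega)]

/-- The coefficient `(p; p)_{2N} / ((p; p)_{N+n} (p; p)_{N-n})`, a centred Gaussian binomial. -/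
noncomputable def centralGauss (p : ℂ) (N : ℕ) (n : ℤ) : ℂ :=
  qPochFin p p (2 * N) * qFactInv p (N + n) * qFactInv p (N - n)

lemma centralGauss_eq_zero {N : ℕ} {n : ℤ} (h : n ∉ Finset.Icc (-N : ℤ) N) :
    centralGauss p N n = 0 := by
  rw [Finset.mem_Icc, not_and_or] at h
  unfold centralGauss
  rcases h with h | h
  · rw [qFactInv, if_pos (by omega), mul_zero, zero_mul]
  · rw [qFactInv, qFactInv, if_pos (by omega : (N : ℤ) - n < 0), mul_zero]

lemma centralGauss_succ (hp : ‖p‖ < 1) (hp0 : p ≠ 0) (N : ℕ) (n : ℤ) :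
    centralGauss p (N + 1) n = (1 + p ^ (2 * N + 1)) * centralGauss p N n
      + p ^ N * (p ^ (1 - n) * centralGauss p N (n - 1))
      + p ^ N * (p ^ (1 + n) * centralGauss p N (n + 1)) := by
  unfold centralGauss
  set u : ℤ := N + 1 + n with hu
  set v : ℤ := N + 1 - n with hv
  have e1 : ((N + 1 : ℕ) : ℤ) + n = u := by push_cast; ring
  have e2 : ((N + 1 : ℕ) : ℤ) - n = v := by push_cast; ring
  have e3 : (N : ℤ) + n = u - 1 := by omega
  have e4 : (N : ℤ) - n = v - 1 := by omega
  have e5 : (N : ℤ) + (n - 1) = u - 1 - 1 := by omega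
  have e6 : (N : ℤ) - (n - 1) = v := by omega
  have e7 : (N : ℤ) + (n + 1) = u := by omega
  have e8 : (N : ℤ) - (n + 1) = v - 1 - 1 := by omega
  have f1 : p ^ N * p ^ (1 - n) = p ^ v := by
    rw [← zpow_natCast, ← zpow_add₀ hp0]; congr 1; omega
  have f2 : p ^ N * p ^ (1 + n) = p ^ u := by
    rw [← zpow_natCast, ← zpow_add₀ hp0]; congr 1; omega
  have f3 : p ^ u * p ^ v = p ^ (2 * N + 1) * p := by
    rw [← pow_succ, ← zpow_natCast, ← zpow_add₀ hp0]; congr 1; omega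
  have f4 : p ^ (2 * N + 1) = p ^ u * p ^ v / p := by field_simp; rw [f3]
  have f5 : p ^ (2 * N) * p = p ^ u * p ^ v / p := by rw [← f4, pow_succ]
  have f6 : p ^ (2 * N + 1) * p = p ^ u * p ^ v := f3.symm
  have g1 : ∀ m : ℤ, p ^ (m - 1) = p ^ m / p := fun m => zpow_sub_one₀ hp0 m
  rw [e1, e2, e3, e4, e5, e6, e7, e8, ← mul_assoc (p ^ N), ← mul_assoc (p ^ N), f1, f2,
    show 2 * (N + 1) = 2 * N + 1 + 1 by ring, qPochFin_succ, qPochFin_succ,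
    qFactInv_pred hp (u - 1), qFactInv_pred hp (v - 1), qFactInv_pred hp u, qFactInv_pred hp v,
    mul_comm p (p ^ (2 * N)), f5, mul_comm p (p ^ (2 * N + 1)), f6, f4, g1, g1]
  field_simp
  ring

variable {z w : ℂ} {e : ℤ → ℂ}

lemma qPochFin_mul_qPochFin_eq_tsum (hp : ‖p‖ < 1) (hp0 : p ≠ 0) (hzw : z * w = p) (he0 : e 0 = 1)
    (hw : ∀ n, w * e n = -(p ^ (-n) * e (n + 1))) (hz : ∀ n, z * e n = -(p ^ n * e (n - 1)))
    (N : ℕ) :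
    qPochFin z p N * qPochFin w p N = ∑' n : ℤ, centralGauss p N n * e n := by
  have hs : ∀ (g : ℤ → ℂ) (N : ℕ), Summable fun n => centralGauss p N n * g n := fun g N =>
    summable_of_ne_finset_zero (s := Finset.Icc (-N : ℤ) N) fun n hn => by
      rw [centralGauss_eq_zero hn, zero_mul]
  induction N with
  | zero =>
    rw [tsum_eq_single 0]
    · simp [centralGauss, qFactInv, qPochFin, he0]
    · intro n hn
      rw [centralGauss_eq_zero (by simpa using hn), zero_mul]
  | succ N ih =>
    have key : ∀ n, centralGauss p (N + 1) n * e n =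
        (1 + p ^ (2 * N + 1)) * (centralGauss p N n * e n)
        + p ^ N * (centralGauss p N (n - 1) * (p ^ (1 - n) * e n))
        + p ^ N * (centralGauss p N (n + 1) * (p ^ (1 + n) * e n)) := fun n => by
      rw [centralGauss_succ hp hp0]; ring
    have h1 : ∑' n : ℤ, centralGauss p N (n - 1) * (p ^ (1 - n) * e n)
        = ∑' n : ℤ, centralGauss p N n * (-(w * e n)) := by
      rw [← (Equiv.addRight (1 : ℤ)).tsum_eq]
      refine tsum_congr fun n => ?_
      rw [hw n, Equiv.coe_addRight, add_sub_cancel_right, neg_neg,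
        show (1 : ℤ) - (n + 1) = -n by ring]
    have h2 : ∑' n : ℤ, centralGauss p N (n + 1) * (p ^ (1 + n) * e n)
        = ∑' n : ℤ, centralGauss p N n * (-(z * e n)) := by
      rw [← (Equiv.addRight (1 : ℤ)).tsum_eq fun n => centralGauss p N n * (-(z * e n))]
      refine tsum_congr fun n => ?_
      rw [hz, Equiv.coe_addRight, neg_neg, add_sub_cancel_right, add_comm 1 n]
    have s1 : Summable fun n : ℤ => centralGauss p N (n - 1) * (p ^ (1 - n) * e n) := by
      rw [← (Equiv.addRight (1 : ℤ)).summable_iff]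
      refine (hs (fun n => p ^ (-n) * e (n + 1)) N).congr fun n => ?_
      rw [Function.comp, Equiv.coe_addRight, add_sub_cancel_right,
        show (1 : ℤ) - (n + 1) = -n by ring]
    have s2 : Summable fun n : ℤ => centralGauss p N (n + 1) * (p ^ (1 + n) * e n) := by
      rw [← (Equiv.addRight (-1 : ℤ)).summable_iff]
      refine (hs (fun n => p ^ n * e (n - 1)) N).congr fun n => ?_
      simp only [Function.comp, Equiv.coe_addRight]
      rw [← sub_eq_add_neg, sub_add_cancel, add_sub_cancel]
    rw [tsum_congr key, ((hs e N).mul_left _ |>.add (s1.mul_left _)).tsum_add (s2.mul_left _),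
      ((hs e N).mul_left _).tsum_add (s1.mul_left _), tsum_mul_left, tsum_mul_left, tsum_mul_left,
      h1, h2]
    have h3 : ∀ c : ℂ, ∑' n : ℤ, centralGauss p N n * (-(c * e n))
        = -c * ∑' n : ℤ, centralGauss p N n * e n := fun c => by
      rw [← tsum_mul_left]; exact tsum_congr fun n => by ring
    rw [h3, h3, ← ih, qPochFin_succ, qPochFin_succ, pow_succ, pow_mul, ← hzw]
    ring

/-- Jacobi's triple product identity, for a summable solution `e` of the first-order recurrences
satisfied by the theta series. -/
theorem jacobi_triple_product (hp : ‖p‖ < 1) (hp0 : p ≠ 0) (hzw : z * w = p) (he0 : e 0 = 1)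
    (hw : ∀ n, w * e n = -(p ^ (-n) * e (n + 1))) (hz : ∀ n, z * e n = -(p ^ n * e (n - 1)))
    (hs : Summable fun n => ‖e n‖) :
    ∑' n, e n = qPochInf z p * qPochInf w p * qPochInf p p := by
  obtain ⟨K, hK⟩ := exists_norm_qFactInv_le hp
  obtain ⟨L, hL⟩ := (tendsto_qPochFin hp p).exists_norm_le
  have hL0 : 0 ≤ L := (norm_nonneg _).trans (hL 0)
  have hK0 : 0 ≤ K := (norm_nonneg _).trans (hK 0)
  have hinf := qPochInf_ne_zero hp hp
  have h1 : Tendsto (fun N : ℕ => ∑' n : ℤ, centralGauss p N n * e n) atTop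
      (𝓝 (∑' n : ℤ, (qPochInf p p)⁻¹ * e n)) := by
    refine tendsto_tsum_of_dominated_convergence (hs.mul_left (L * K * K)) (fun n => ?_)
      (Eventually.of_forall fun N n => ?_)
    · refine Tendsto.mul_const _ ?_
      have t1 : Tendsto (fun N : ℕ => qPochFin p p (2 * N)) atTop (𝓝 (qPochInf p p)) :=
        (tendsto_qPochFin hp p).comp (tendsto_id.const_mul_atTop' two_pos)
      have t2 : Tendsto (fun N : ℕ => qFactInv p (N + n)) atTop (𝓝 (qPochInf p p)⁻¹) :=
        (tendsto_qFactInv hp).comp (tendsto_atTop_add_const_right _ _ tendsto_natCast_atTop_atTop)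
      have t3 : Tendsto (fun N : ℕ => qFactInv p (N - n)) atTop (𝓝 (qPochInf p p)⁻¹) :=
        (tendsto_qFactInv hp).comp (tendsto_atTop_add_const_right _ _ tendsto_natCast_atTop_atTop)
      have := (t1.mul t2).mul t3
      rwa [mul_inv_cancel₀ hinf, one_mul] at this
    · rw [norm_mul, centralGauss, norm_mul, norm_mul]
      gcongr
      exacts [hL _, hK _, hK _]
  have h2 := (tendsto_qPochFin hp z).mul (tendsto_qPochFin hp w)
  have h3 := tendsto_nhds_unique h1
    (h2.congr fun N => qPochFin_mul_qPochFin_eq_tsum hp hp0 hzw he0 hw hz N)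
  rw [tsum_mul_left] at h3
  rw [← h3]
  field_simp

end JacobiTripleProduct

section ThetaSeries

variable {q : ℂ}

lemma tsum_theta_eq (hq : ‖q‖ < 1) {b : ℕ} (c : ℕ) (hb : 1 ≤ b) :
    ∑' n : ℕ, (-1) ^ n * q ^ (n * ((b + c) * n + c)) * (1 - q ^ (b * (2 * n + 1)))
      = qPochInf (q ^ b) (q ^ (2 * (b + c))) * qPochInf (q ^ (b + 2 * c)) (q ^ (2 * (b + c)))
        * qPochInf (q ^ (2 * (b + c))) (q ^ (2 * (b + c))) := by
  rcases eq_or_ne q 0 with rfl | hq0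
  · have h1 : b ≠ 0 := by omega
    rw [tsum_eq_single 0]
    · simp [qPochInf, h1]
    · intro n hn
      have : n * ((b + c) * n + c) ≠ 0 := by simp [hn, h1]
      simp [zero_pow this]
  set p : ℂ := q ^ (2 * (b + c)) with hp_def
  have hp : ‖p‖ < 1 := by
    rw [hp_def, norm_pow]; exact pow_lt_one₀ (norm_nonneg _) hq (by omega)
  have hp0 : p ≠ 0 := pow_ne_zero _ hq0
  let e : ℤ → ℂ := fun n => (-1) ^ n * q ^ ((b + c) * n ^ 2 + c * n)
  have hpz : ∀ n : ℤ, p ^ n = q ^ (2 * (b + c) * n) := fun n => by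
    rw [hp_def, ← zpow_natCast, ← zpow_mul]; push_cast; rfl
  have hr : 0 < ‖q‖ := norm_pos_iff.mpr hq0
  have hbound : ∀ n : ℤ, ∀ m : ℕ, (m : ℤ) ≤ (b + c) * n ^ 2 + c * n → ‖e n‖ ≤ ‖q‖ ^ m := by
    intro n m h
    have : ‖e n‖ = ‖q‖ ^ ((b + c) * n ^ 2 + c * n : ℤ) := by simp [e]
    rw [this, ← zpow_natCast]
    exact zpow_le_zpow_right_of_le_one₀ hr hq.le h
  have hgeo := summable_geometric_of_lt_one (norm_nonneg q) hq
  have hb' : (1 : ℤ) ≤ b := by exact_mod_cast hb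
  have hc' : (0 : ℤ) ≤ c := by positivity
  have hs : Summable fun n => ‖e n‖ := by
    refine Summable.of_nat_of_neg
      (hgeo.of_nonneg_of_le (fun _ => norm_nonneg _) fun n => hbound n n ?_)
      (hgeo.of_nonneg_of_le (fun _ => norm_nonneg _) fun n => hbound (-n) n ?_)
    · have : (n : ℤ) ≤ n ^ 2 := by exact_mod_cast Nat.le_self_pow two_ne_zero n
      nlinarith [mul_nonneg hc' (Int.natCast_nonneg n)]
    · have : (n : ℤ) ≤ n ^ 2 := by exact_mod_cast Nat.le_self_pow two_ne_zero n
      nlinarith [mul_nonneg hc' (sub_nonneg.mpr this)]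
  have key : ∑' n, e n = qPochInf (q ^ b) p * qPochInf (q ^ (b + 2 * c)) p * qPochInf p p := by
    refine jacobi_triple_product hp hp0 ?_ ?_ (fun n => ?_) (fun n => ?_) hs
    · rw [hp_def, ← pow_add]; congr 1; ring
    · simp [e]
    · have h1 : q ^ (b + 2 * c) * q ^ ((b + c) * n ^ 2 + c * n : ℤ)
          = q ^ (2 * (b + c) * (-n) : ℤ) * q ^ ((b + c) * (n + 1) ^ 2 + c * (n + 1) : ℤ) := by
        rw [← zpow_natCast, ← zpow_add₀ hq0, ← zpow_add₀ hq0]; congr 1; push_cast; ring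
      simp only [e]
      rw [hpz, zpow_add_one₀ (by norm_num : (-1 : ℂ) ≠ 0), mul_left_comm, h1]
      ring
    · have h1 : q ^ b * q ^ ((b + c) * n ^ 2 + c * n : ℤ)
          = q ^ (2 * (b + c) * n : ℤ) * q ^ ((b + c) * (n - 1) ^ 2 + c * (n - 1) : ℤ) := by
        rw [← zpow_natCast, ← zpow_add₀ hq0, ← zpow_add₀ hq0]; congr 1; ring
      simp only [e]
      rw [hpz, zpow_sub_one₀ (by norm_num : (-1 : ℂ) ≠ 0), mul_left_comm, h1]
      norm_num
      ring
  have s1 : Summable fun n : ℕ => e n :=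
    (hs.of_norm).comp_injective Nat.cast_injective
  have s2 : Summable fun n : ℕ => e (-(n + 1)) :=
    (hs.of_norm).comp_injective fun m n h => by simpa using h
  rw [← key, tsum_of_nat_of_neg_add_one s1 s2, ← s1.tsum_add s2]
  refine tsum_congr fun n => ?_
  have h1 : ((b + c) * (n : ℤ) ^ 2 + c * n : ℤ) = (n * ((b + c) * n + c) : ℕ) := by
    push_cast; ring
  have h2 : ((b + c) * (-((n : ℤ) + 1)) ^ 2 + c * (-((n : ℤ) + 1)) : ℤ)
      = (n * ((b + c) * n + c) + b * (2 * n + 1) : ℕ) := by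
    push_cast; ring
  have h3 : (-1 : ℂ) ^ (-((n : ℤ) + 1)) = -(-1) ^ n := by
    rw [zpow_neg, ← Nat.cast_succ, zpow_natCast, ← inv_pow, inv_neg, inv_one, pow_succ]; ring
  simp only [e]
  rw [h1, h2, h3, zpow_natCast, zpow_natCast, zpow_natCast, pow_add]
  ring

/-- The quotient `(-q; q)_n / (q; q)_n`. -/
noncomputable def qRatio (q : ℂ) (n : ℕ) : ℂ := qPochFin (-q) q n / qPochFin q q n

lemma qRatio_ne_zero (hq : ‖q‖ < 1) (n : ℕ) : qRatio q n ≠ 0 :=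
  div_ne_zero (qPochFin_ne_zero hq (by rwa [norm_neg]) n) (qPochFin_ne_zero hq hq n)

lemma qRatio_succ_mul (hq : ‖q‖ < 1) (n : ℕ) :
    qRatio q (n + 1) * (1 - q ^ (n + 1)) = qRatio q n * (1 + q ^ (n + 1)) := by
  have h1 := one_sub_mul_pow_ne_zero hq hq n
  have h2 := qPochFin_ne_zero hq hq n
  rw [qRatio, qRatio, qPochFin_succ, qPochFin_succ, pow_succ']
  field_simp
  ring

lemma tendsto_qRatio (hq : ‖q‖ < 1) :
    Tendsto (qRatio q) atTop (𝓝 (qPochInf (-q) q / qPochInf q q)) :=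
  (tendsto_qPochFin hq _).div (tendsto_qPochFin hq _) (qPochInf_ne_zero hq hq)

lemma qRatio_limit_ne_zero (hq : ‖q‖ < 1) : qPochInf (-q) q / qPochInf q q ≠ 0 :=
  div_ne_zero (qPochInf_ne_zero hq (by rwa [norm_neg])) (qPochInf_ne_zero hq hq)

lemma exists_norm_qRatio_div_le (hq : ‖q‖ < 1) :
    ∃ K : ℝ, 0 ≤ K ∧ ∀ m n, ‖qRatio q m / qRatio q n‖ ≤ K := by
  obtain ⟨K, hK⟩ := (tendsto_qRatio hq).exists_norm_le
  obtain ⟨L, hL⟩ := ((tendsto_qRatio hq).inv₀ (qRatio_limit_ne_zero hq)).exists_norm_le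
  have hL0 : 0 ≤ L := (norm_nonneg _).trans (hL 0)
  have hK0 : 0 ≤ K := (norm_nonneg _).trans (hK 0)
  refine ⟨K * L, mul_nonneg hK0 hL0, fun m n => ?_⟩
  rw [div_eq_mul_inv, norm_mul]
  exact mul_le_mul (hK m) (hL n) (norm_nonneg _) hK0

/-- The general term of Andrews' series `H_{k,b}(-1/q; x; q)` at `k = b + c`, `x = q^{j+1}`,
normalised by `(-q; q)_∞ / (q; q)_∞`. -/
noncomputable def andrewsTerm (q : ℂ) (j b c n : ℕ) : ℂ :=
  (-1) ^ n * q ^ (n * ((b + c) * n + (b + c) * j + c)) * (1 - q ^ (b * (j + 1 + 2 * n)))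
    * (qRatio q n / qRatio q (n + j))

lemma norm_one_sub_pow_le_two (hq : ‖q‖ < 1) (m : ℕ) : ‖1 - q ^ m‖ ≤ 2 := by
  have h1 : ‖q ^ m‖ ≤ 1 := by rw [norm_pow]; exact pow_le_one₀ (norm_nonneg _) hq.le
  calc ‖1 - q ^ m‖ ≤ ‖(1 : ℂ)‖ + ‖q ^ m‖ := norm_sub_le _ _
    _ ≤ 2 := by rw [norm_one]; linarith

lemma norm_signed_pow_mul_le (hq : ‖q‖ < 1) {E m : ℕ} (h : m ≤ E) (n i : ℕ) {K : ℝ} {x : ℂ}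
    (hx : ‖x‖ ≤ K) : ‖(-1) ^ n * q ^ E * (1 - q ^ i) * x‖ ≤ 2 * K * ‖q‖ ^ m := by
  rw [norm_mul, norm_mul, norm_mul, norm_pow, norm_pow, norm_neg, norm_one, one_pow, one_mul]
  have h1 := pow_le_pow_of_le_one (norm_nonneg q) hq.le h
  have h2 := norm_one_sub_pow_le_two hq i
  calc ‖q‖ ^ E * ‖1 - q ^ i‖ * ‖x‖ ≤ ‖q‖ ^ m * 2 * K := by gcongr
    _ = _ := by ring

lemma le_mul_of_one_le_add {b c : ℕ} (h : 1 ≤ b + c) (j n : ℕ) :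
    n ≤ n * ((b + c) * n + (b + c) * j + c) := by
  rcases Nat.eq_zero_or_pos n with rfl | hn
  · simp
  · exact Nat.le_mul_of_pos_right _ (by positivity)

lemma summable_andrewsTerm (hq : ‖q‖ < 1) {b c : ℕ} (h : 1 ≤ b + c) (j : ℕ) :
    Summable (andrewsTerm q j b c) := by
  obtain ⟨K, -, hK⟩ := exists_norm_qRatio_div_le hq
  exact Summable.of_norm_bounded
    ((summable_geometric_of_lt_one (norm_nonneg q) hq).mul_left (2 * K))
    fun n => norm_signed_pow_mul_le hq (le_mul_of_one_le_add h j n) _ _ (hK _ _)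

/-- Andrews' series `H_{k,b}(-1/q; x; q)` at `k = b + c`, `x = q^{j+1}`, normalised by
`(-q; q)_∞ / (q; q)_∞`. -/
noncomputable def andrewsSeries (q : ℂ) (j b c : ℕ) : ℂ := ∑' n, andrewsTerm q j b c n

lemma andrewsSeries_zero (j c : ℕ) : andrewsSeries q j 0 c = 0 := by
  simp [andrewsSeries, andrewsTerm]

lemma andrewsSeries_sub (hq : ‖q‖ < 1) (j b c : ℕ) :
    andrewsSeries q j (b + 1) c - andrewsSeries q j b (c + 1)
      = q ^ ((j + 1) * b) * (andrewsSeries q (j + 1) (c + 1) b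
        + q ^ (j + 1) * andrewsSeries q (j + 1) c (b + 1)) := by
  let α : ℕ → ℂ := fun n => (-1) ^ n * q ^ (n * ((b + 1 + c) * n + (b + 1 + c) * j + c))
    * (1 - q ^ n) * (qRatio q n / qRatio q (n + j))
  let β : ℕ → ℂ := fun n => andrewsTerm q j (b + 1) c n - andrewsTerm q j b (c + 1) n - α n
  have s1 := summable_andrewsTerm hq (show 1 ≤ b + 1 + c by omega) j
  have s2 := summable_andrewsTerm hq (show 1 ≤ b + (c + 1) by omega) j
  have s3 := summable_andrewsTerm hq (show 1 ≤ c + 1 + b by omega) (j + 1)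
  have s4 := summable_andrewsTerm hq (show 1 ≤ c + (b + 1) by omega) (j + 1)
  have sα : Summable α := by
    obtain ⟨K, -, hK⟩ := exists_norm_qRatio_div_le hq
    exact Summable.of_norm_bounded
      ((summable_geometric_of_lt_one (norm_nonneg q) hq).mul_left (2 * K))
      fun n => norm_signed_pow_mul_le hq
        (le_mul_of_one_le_add (show 1 ≤ b + 1 + c by omega) j n) _ _ (hK _ _)
  have sβ : Summable β := (s1.sub s2).sub sα
  have hα : ∑' n, α n = ∑' n, α (n + 1) := by
    rw [sα.tsum_eq_zero_add]; simp [α]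
  have hlhs : andrewsSeries q j (b + 1) c - andrewsSeries q j b (c + 1)
      = ∑' n, (α (n + 1) + β n) := by
    rw [((summable_nat_add_iff 1).mpr sα).tsum_add sβ, ← hα, ← sα.tsum_add sβ, andrewsSeries,
      andrewsSeries, ← s1.tsum_sub s2]
    exact tsum_congr fun n => by simp only [β]; ring
  rw [hlhs, andrewsSeries, andrewsSeries, ← tsum_mul_left, ← s3.tsum_add (s4.mul_left _),
    ← tsum_mul_left]
  refine tsum_congr fun n => ?_
  have hne := qRatio_ne_zero hq (n + j)
  have hne' := qRatio_ne_zero hq (n + j + 1)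
  have r1 : qRatio q (n + 1) / qRatio q (n + 1 + j) * (1 - q ^ (n + 1))
      = qRatio q n / qRatio q (n + j + 1) * (1 + q ^ (n + 1)) := by
    rw [div_mul_eq_mul_div, qRatio_succ_mul hq, show n + 1 + j = n + j + 1 by ring]; ring
  have r2 : qRatio q n / qRatio q (n + j) * (1 - q ^ (n + j + 1))
      = qRatio q n / qRatio q (n + j + 1) * (1 + q ^ (n + j + 1)) := by
    rw [div_mul_eq_mul_div, div_mul_eq_mul_div, div_eq_div_iff hne hne']
    linear_combination qRatio q n * qRatio_succ_mul hq (n + j)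
  have hαn : α (n + 1) = -(-1) ^ n
      * q ^ ((n + 1) * ((b + 1 + c) * (n + 1) + (b + 1 + c) * j + c))
      * (qRatio q n / qRatio q (n + j + 1) * (1 + q ^ (n + 1))) := by
    rw [← r1]; simp only [α]; ring
  have hβn : β n = (-1) ^ n * q ^ (n * ((b + 1 + c) * n + (b + 1 + c) * j + c))
      * q ^ ((j + 1) * b + n * (2 * b + 1))
      * (qRatio q n / qRatio q (n + j + 1) * (1 + q ^ (n + j + 1))) := by
    rw [← r2]; simp only [β, α, andrewsTerm]; ring
  rw [hαn, hβn]
  simp only [andrewsTerm, ← add_assoc]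
  ring

lemma tendsto_andrewsSeries (hq : ‖q‖ < 1) {b : ℕ} (c : ℕ) (hb : 1 ≤ b) :
    Tendsto (fun j => andrewsSeries q j b c) atTop
      (𝓝 (qPochInf (-q) q / qPochInf q q)⁻¹) := by
  obtain ⟨K, hK0, hK⟩ := exists_norm_qRatio_div_le hq
  have hgeo := summable_geometric_of_lt_one (norm_nonneg q) hq
  have hpow : ∀ g : ℕ → ℕ, Tendsto g atTop atTop →
      Tendsto (fun j => ‖q‖ ^ g j) atTop (𝓝 0) := fun g hg =>
    (tendsto_pow_atTop_nhds_zero_of_lt_one (norm_nonneg q) hq).comp hg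
  have h1 : Tendsto (fun j => ∑' n, andrewsTerm q j b c n) atTop
      (𝓝 (∑' n : ℕ, if n = 0 then (qPochInf (-q) q / qPochInf q q)⁻¹ else 0)) := by
    refine tendsto_tsum_of_dominated_convergence (hgeo.mul_left (2 * K)) (fun n => ?_)
      (Eventually.of_forall fun j n => norm_signed_pow_mul_le hq
        (le_mul_of_one_le_add (by omega) j n) _ _ (hK _ _))
    rcases Nat.eq_zero_or_pos n with rfl | hn
    · have t1 : Tendsto (fun j => q ^ (b * (j + 1 + 2 * 0))) atTop (𝓝 0) := by
        rw [tendsto_zero_iff_norm_tendsto_zero]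
        simp only [norm_pow]
        refine hpow _ (tendsto_atTop_mono (fun j => ?_) tendsto_id)
        simp only [id]; nlinarith
      have t2 := ((tendsto_qRatio hq).inv₀ (qRatio_limit_ne_zero hq))
      have t3 := (t1.const_sub 1).mul t2
      simpa [andrewsTerm, qRatio, qPochFin] using t3
    · rw [if_neg hn.ne']
      have t1 : Tendsto (fun j => 2 * K * ‖q‖ ^ j) atTop (𝓝 0) := by
        simpa using (hpow _ tendsto_id).const_mul (2 * K)
      refine squeeze_zero_norm (fun j => norm_signed_pow_mul_le hq ?_ _ _ (hK _ _)) t1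
      nlinarith [Nat.mul_le_mul hn (Nat.mul_le_mul (show 1 ≤ b + c by omega) le_rfl : 1 * j ≤ _),
        Nat.zero_le (n * ((b + c) * n + c))]
  rwa [tsum_ite_eq] at h1

lemma andrewsSeries_level_zero (hq : ‖q‖ < 1) {b : ℕ} (c : ℕ) (hb : 1 ≤ b) :
    andrewsSeries q 0 b c
      = qPochInf (q ^ b) (q ^ (2 * (b + c))) * qPochInf (q ^ (b + 2 * c)) (q ^ (2 * (b + c)))
        * qPochInf (q ^ (2 * (b + c))) (q ^ (2 * (b + c))) := by
  rw [← tsum_theta_eq hq c hb]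
  refine tsum_congr fun n => ?_
  rw [andrewsTerm, add_zero, div_self (qRatio_ne_zero hq n), mul_one, mul_zero, add_zero, zero_add,
    add_comm 1]

end ThetaSeries

section Uniqueness

lemma eq_zero_of_gordon_recurrence {r : ℝ} (hr0 : 0 ≤ r) (hr : r < 1) {k : ℕ} {D : ℕ → ℕ → ℂ}
    {z : ℕ → ℂ} (hz : ∀ j, ‖z j‖ ≤ r ^ (j + 1)) (h0 : ∀ j, D j 0 = 0)
    (hrec : ∀ j b, b + 1 ≤ k → D j (b + 1) - D j b
      = z j ^ b * (D (j + 1) (k - b) + z j * D (j + 1) (k - (b + 1))))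
    (hlim : ∀ b ≤ k, Tendsto (fun j => D j b) atTop (𝓝 0)) (j : ℕ) {b : ℕ} (hb : b ≤ k) :
    D j b = 0 := by
  have hz1 : ∀ j, ‖z j‖ ≤ 1 := fun j => (hz j).trans (pow_le_one₀ hr0 hr.le)
  have step : ∀ j m, (∀ b ≤ k, ‖D (j + 1) b‖ ≤ m) →
      ∀ b ≤ k, ‖D j b‖ ≤ (1 + 2 * k * r ^ (j + 1)) * m := by
    intro j m hm b hb
    have hm0 : 0 ≤ m := (norm_nonneg _).trans (hm 0 (Nat.zero_le _))
    have hrj : 0 ≤ r ^ (j + 1) := pow_nonneg hr0 _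
    have hdiff : ∀ b, b + 1 ≤ k → ‖D j (b + 1) - D j b‖ ≤ ‖z j‖ ^ b * ((1 + r ^ (j + 1)) * m) := by
      intro b hb
      rw [hrec j b hb, norm_mul, norm_pow]
      gcongr
      calc _ ≤ ‖D (j + 1) (k - b)‖ + ‖z j * D (j + 1) (k - (b + 1))‖ := norm_add_le _ _
        _ ≤ m + r ^ (j + 1) * m := by
          rw [norm_mul]
          gcongr
          exacts [hm _ (Nat.sub_le _ _), hz j, hm _ (Nat.sub_le _ _)]
        _ = _ := by ring
    have claim : ∀ b ≤ k, ‖D j b‖ ≤ (1 + 2 * b * r ^ (j + 1)) * m := by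
      intro b
      induction b with
      | zero => intro _; simpa [h0] using hm0
      | succ b ih =>
        intro hb
        have h1 := hdiff b hb
        have h2 : ‖D j (b + 1)‖ ≤ ‖D j b‖ + ‖D j (b + 1) - D j b‖ := by
          simpa using norm_add_le (D j b) (D j (b + 1) - D j b)
        rcases Nat.eq_zero_or_pos b with rfl | hb0
        · rw [pow_zero, one_mul] at h1
          rw [h0, norm_zero, zero_add (‖D j (0 + 1) - 0‖), ← h0 j] at h2
          refine (h2.trans h1).trans ?_
          gcongr
          push_cast
          linarith
        · have h3 : ‖z j‖ ^ b ≤ r ^ (j + 1) :=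
            (pow_le_of_le_one (norm_nonneg _) (hz1 j) hb0.ne').trans (hz j)
          have h4 : ‖z j‖ ^ b * ((1 + r ^ (j + 1)) * m) ≤ r ^ (j + 1) * (2 * m) := by
            have : r ^ (j + 1) ≤ 1 := pow_le_one₀ hr0 hr.le
            gcongr
            linarith
          have h5 := ih (by omega)
          push_cast
          linarith
    refine (claim b hb).trans ?_
    have : (b : ℝ) ≤ k := by exact_mod_cast hb
    gcongr
  have hsum : Summable fun j : ℕ => 2 * k * r ^ (j + 1) :=
    ((summable_nat_add_iff 1).mpr (summable_geometric_of_lt_one hr0 hr)).mul_left _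
  set C := Real.exp (∑' j : ℕ, 2 * k * r ^ (j + 1)) with hC
  have hnn : ∀ j : ℕ, 0 ≤ 2 * k * r ^ (j + 1) := fun j => by positivity
  have iter : ∀ n j m, (∀ b ≤ k, ‖D (j + n) b‖ ≤ m) →
      ∀ b ≤ k, ‖D j b‖ ≤ (∏ i ∈ Finset.Ico j (j + n), (1 + 2 * k * r ^ (i + 1))) * m := by
    intro n
    induction n with
    | zero => intro j m hm b hb; simpa using hm b hb
    | succ n ih =>
      intro j m hm b hb
      rw [← add_assoc, Finset.prod_Ico_succ_top (by omega), mul_assoc]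
      exact ih j _ (step (j + n) m hm) b hb
  have hprod : ∀ s : Finset ℕ, ∏ i ∈ s, (1 + 2 * k * r ^ (i + 1)) ≤ C := fun s =>
    (Real.prod_one_add_le_exp_sum s hnn).trans
      (Real.exp_le_exp.mpr (hsum.sum_le_tsum s fun _ _ => hnn _))
  have hsmall : ∀ ε > 0, ‖D j b‖ ≤ C * ε := by
    intro ε hε
    have h1 : ∀ᶠ n in atTop, ∀ b ∈ Finset.range (k + 1), ‖D n b‖ ≤ ε := by
      rw [Filter.eventually_all_finset]
      intro b hb
      have := (hlim b (by simpa [Nat.lt_succ_iff] using hb)).norm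
      rw [norm_zero] at this
      exact (this.eventually (gt_mem_nhds hε)).mono fun n hn => le_of_lt hn
    obtain ⟨n, hn⟩ := ((tendsto_add_atTop_nat j).eventually h1).exists
    have h2 := iter n j ε (fun b hb => by
      rw [add_comm]; exact hn b (by simpa [Nat.lt_succ_iff] using hb)) b hb
    exact h2.trans (mul_le_mul_of_nonneg_right (hprod _) hε.le)
  have hC0 : 0 < C := Real.exp_pos _
  rw [← norm_le_zero_iff]
  refine le_of_forall_pos_le_add fun ε hε => ?_
  have := hsmall (ε / C) (by positivity)
  rwa [mul_div_cancel₀ _ hC0.ne', ← zero_add ε] at this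

end Uniqueness

section Overpartitions

/-- Parity and multiplicity conditions on the part `i`. -/
def PartCond (i f g : ℕ) : Prop := g ≤ 1 ∧ (Odd i → g ≤ f) ∧ (Even i → Even (f + g))

/-- Pairs of multiplicity functions supported on the parts exceeding `j` and satisfying there the
parity conditions and the adjacency condition with bound `2 * k`. -/
def TailCond (k j : ℕ) (p : (ℕ →₀ ℕ) × (ℕ →₀ ℕ)) : Prop :=
  (∀ i ≤ j, p.1 i = 0 ∧ p.2 i = 0) ∧
  ∀ i, j < i → PartCond i (p.1 i) (p.2 i) ∧ p.1 i + p.2 i + p.1 (i + 1) + 1 ≤ 2 * k + p.2 (i + 1)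

/-- The pairs satisfying `TailCond` whose part `j + 1` is compatible with `s` occurrences of the
part `j`. -/
def tailSet (k j s : ℕ) : Set ((ℕ →₀ ℕ) × (ℕ →₀ ℕ)) :=
  {p | TailCond k j p ∧ s + p.1 (j + 1) + 1 ≤ 2 * k + p.2 (j + 1)}

lemma setOf_uCond_eq_tailSet {k a : ℕ} (hak : a ≤ k) :
    {p | IsOverPtn p ∧ uCond 2 (2 * k) (2 * a) p} = tailSet k 0 (2 * (k - a)) := by
  ext p
  simp only [Set.mem_ofPred_eq, IsOverPtn, uCond, tailSet, TailCond, PartCond]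
  constructor
  · rintro ⟨⟨h1, h2, h3⟩, h4, h5, h6, h7⟩
    refine ⟨⟨fun i hi => ?_, fun i hi => ⟨⟨h3 i, ?_, ?_⟩, ?_⟩⟩, ?_⟩
    · obtain rfl : i = 0 := by omega
      exact ⟨h1, h2⟩
    · rintro ⟨l, rfl⟩
      simpa using h5 l
    · rintro ⟨l, rfl⟩
      obtain ⟨l, rfl⟩ : ∃ m, l = m + 1 := ⟨l - 1, by omega⟩
      rw [even_iff_two_dvd, show l + 1 + (l + 1) = 2 * l + 2 by ring]
      exact h6 l
    · simpa using h7 i hi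
    · rw [zero_add]; omega
  · rintro ⟨⟨h1, h2⟩, h3⟩
    rw [zero_add] at h3
    refine ⟨⟨(h1 0 le_rfl).1, (h1 0 le_rfl).2, fun i => ?_⟩, by omega, fun l => ?_, fun l => ?_,
      fun l hl => ?_⟩
    · rcases Nat.eq_zero_or_pos i with rfl | hi
      · rw [(h1 0 le_rfl).2]; omega
      · exact (h2 i hi).1.1
    · simpa using (h2 (2 * l + 1) (by omega)).1.2.1 ⟨l, rfl⟩
    · exact even_iff_two_dvd.mp ((h2 (2 * l + 2) (by omega)).1.2.2 ⟨l + 1, by ring⟩)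
    · simpa using (h2 l hl).2

/-- Add `f` plain and `g` overlined occurrences of the part `i`. -/
noncomputable def addPart (i f g : ℕ) (p : (ℕ →₀ ℕ) × (ℕ →₀ ℕ)) : (ℕ →₀ ℕ) × (ℕ →₀ ℕ) :=
  p + (Finsupp.single i f, Finsupp.single i g)

lemma addPart_injective (i f g : ℕ) : Function.Injective (addPart i f g) :=
  add_left_injective _

lemma opWt_addPart (i f g : ℕ) (p : (ℕ →₀ ℕ) × (ℕ →₀ ℕ)) :
    opWt (addPart i f g p) = i * (f + g) + opWt p := by
  have h : ∀ u v : ℕ →₀ ℕ, (u + v).sum (fun i v => i * v)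
      = u.sum (fun i v => i * v) + v.sum (fun i v => i * v) := fun u v =>
    Finsupp.sum_add_index' (fun _ => mul_zero _) (fun _ _ _ => mul_add _ _ _)
  simp only [opWt, addPart, Prod.fst_add, Prod.snd_add, h]
  rw [Finsupp.sum_single_index (mul_zero _), Finsupp.sum_single_index (mul_zero _)]
  ring

lemma addPart_fst_apply (i f g : ℕ) (p : (ℕ →₀ ℕ) × (ℕ →₀ ℕ)) (l : ℕ) :
    (addPart i f g p).1 l = p.1 l + if i = l then f else 0 := by
  simp [addPart, Finsupp.single_apply]

lemma addPart_snd_apply (i f g : ℕ) (p : (ℕ →₀ ℕ) × (ℕ →₀ ℕ)) (l : ℕ) :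
    (addPart i f g p).2 l = p.2 l + if i = l then g else 0 := by
  simp [addPart, Finsupp.single_apply]

lemma mem_addPart_image_tailSet {k j f g : ℕ} (h : PartCond (j + 1) f g)
    (p : (ℕ →₀ ℕ) × (ℕ →₀ ℕ)) :
    p ∈ addPart (j + 1) f g '' tailSet k (j + 1) (f + g)
      ↔ TailCond k j p ∧ p.1 (j + 1) = f ∧ p.2 (j + 1) = g := by
  constructor
  · rintro ⟨p, ⟨⟨h1, h2⟩, h3⟩, rfl⟩
    have h0 := h1 (j + 1) le_rfl
    refine ⟨⟨fun i hi => ?_, fun i hi => ?_⟩, ?_, ?_⟩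
    · rw [addPart_fst_apply, addPart_snd_apply, if_neg (by omega), if_neg (by omega)]
      exact h1 i (by omega)
    · simp only [addPart_fst_apply, addPart_snd_apply]
      rw [if_neg (show j + 1 ≠ i + 1 by omega), if_neg (show j + 1 ≠ i + 1 by omega)]
      rcases Nat.lt_or_ge (j + 1) i with hi' | hi'
      · rw [if_neg (by omega), if_neg (by omega)]
        exact h2 i hi'
      · obtain rfl : i = j + 1 := by omega
        rw [if_pos rfl, if_pos rfl, h0.1, h0.2]
        simp only [zero_add, add_zero]
        exact ⟨h, h3⟩
    · simp [addPart_fst_apply, h0.1]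
    · simp [addPart_snd_apply, h0.2]
  · rintro ⟨⟨h1, h2⟩, rfl, rfl⟩
    have he : ∀ (u : ℕ →₀ ℕ) (l : ℕ), l ≠ j + 1 → u.erase (j + 1) l = u l := fun u l hl =>
      Finsupp.erase_ne hl
    refine ⟨(p.1.erase (j + 1), p.2.erase (j + 1)), ⟨⟨fun i hi => ?_, fun i hi => ?_⟩, ?_⟩, ?_⟩
    · rcases Nat.lt_or_ge i (j + 1) with hi' | hi'
      · dsimp only
        rw [he _ _ (by omega), he _ _ (by omega)]
        exact h1 i (by omega)
      · obtain rfl : i = j + 1 := by omega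
        simp
    · dsimp only
      rw [he _ _ (by omega), he _ _ (by omega), he _ _ (by omega), he _ _ (by omega)]
      exact h2 i (by omega)
    · dsimp only
      rw [he _ _ (by omega), he _ _ (by omega)]
      exact (h2 (j + 1) (by omega)).2
    · exact Prod.ext (Finsupp.erase_add_single _ _) (Finsupp.erase_add_single _ _)

variable {q : ℂ}

lemma summable_pow_weight {r : ℝ} (hr0 : 0 ≤ r) (hr : r < 1) :
    Summable ({f : ℕ →₀ ℕ | f 0 = 0}.indicator fun f => r ^ (f.sum fun i v => i * v)) := by
  classical
  let c : ℕ × ℕ → ℝ := fun x => if x.1 = 0 ∨ x.2 = 0 then 0 else r ^ (x.1 * x.2)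
  have hc0 : ∀ x, 0 ≤ c x := fun x => by dsimp only [c]; split_ifs <;> positivity
  have hc : Summable c := by
    have hgeo := summable_geometric_of_lt_one hr0 hr
    have hgeo' : Summable fun i : ℕ => r ^ (i - 1) :=
      (summable_nat_add_iff 1).mp (by simpa using hgeo)
    refine (hgeo'.mul_of_nonneg hgeo (fun _ => by positivity) fun _ => by positivity).of_nonneg_of_le
      hc0 fun x => ?_
    dsimp only [c]
    split_ifs with h
    · positivity
    · obtain ⟨i, v⟩ := x
      dsimp only at h ⊢
      rw [← pow_add]
      refine pow_le_pow_of_le_one hr0 hr.le ?_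
      obtain ⟨i, rfl⟩ : ∃ m, i = m + 1 := ⟨i - 1, by omega⟩
      rw [Nat.add_sub_cancel]
      nlinarith [show 1 ≤ v by omega, Nat.zero_le i]
  have h1 := (summable_finsetProd_of_summable_nonneg hc0 hc).comp_injective
    (Finsupp.graph_injective ℕ ℕ)
  refine h1.congr fun f => ?_
  simp only [Function.comp, Finsupp.graph, Finset.prod_map]
  by_cases hf : f 0 = 0
  · rw [Set.indicator_of_mem (by exact hf), Finsupp.sum, ← Finset.prod_pow_eq_pow_sum]
    refine Finset.prod_congr rfl fun i hi => if_neg ?_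
    rw [Finsupp.mem_support_iff] at hi
    rintro (rfl | h)
    exacts [hi hf, hi h]
  · rw [Set.indicator_of_notMem (by exact hf)]
    exact Finset.prod_eq_zero (Finsupp.mem_support_iff.mpr hf) (if_pos (Or.inl rfl))
lemma norm_indicator_pow_opWt_le {S : Set ((ℕ →₀ ℕ) × (ℕ →₀ ℕ))}
    (hS : ∀ p ∈ S, p.1 0 = 0 ∧ p.2 0 = 0) (p : (ℕ →₀ ℕ) × (ℕ →₀ ℕ)) :
    ‖S.indicator (fun p => q ^ opWt p) p‖
      ≤ ({f : ℕ →₀ ℕ | f 0 = 0}.indicator fun f => ‖q‖ ^ (f.sum fun i v => i * v)) p.1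
        * ({f : ℕ →₀ ℕ | f 0 = 0}.indicator fun f => ‖q‖ ^ (f.sum fun i v => i * v)) p.2 := by
  by_cases hp : p ∈ S
  · rw [Set.indicator_of_mem hp, Set.indicator_of_mem (by exact (hS p hp).1),
      Set.indicator_of_mem (by exact (hS p hp).2), norm_pow, opWt, pow_add]
  · rw [Set.indicator_of_notMem hp, norm_zero]
    exact mul_nonneg (Set.indicator_nonneg (fun _ _ => by positivity) _)
      (Set.indicator_nonneg (fun _ _ => by positivity) _)

lemma summable_weight_bound (hq : ‖q‖ < 1) :
    Summable fun p : (ℕ →₀ ℕ) × (ℕ →₀ ℕ) =>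
      ({f : ℕ →₀ ℕ | f 0 = 0}.indicator fun f => ‖q‖ ^ (f.sum fun i v => i * v)) p.1
        * ({f : ℕ →₀ ℕ | f 0 = 0}.indicator fun f => ‖q‖ ^ (f.sum fun i v => i * v)) p.2 := by
  have h := summable_pow_weight (norm_nonneg q) hq
  exact h.mul_of_nonneg h (Set.indicator_nonneg fun _ _ => by positivity)
    (Set.indicator_nonneg fun _ _ => by positivity)

lemma summable_indicator_pow_opWt (hq : ‖q‖ < 1) {S : Set ((ℕ →₀ ℕ) × (ℕ →₀ ℕ))}
    (hS : ∀ p ∈ S, p.1 0 = 0 ∧ p.2 0 = 0) : Summable (S.indicator fun p => q ^ opWt p) :=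
  Summable.of_norm_bounded (summable_weight_bound hq) (norm_indicator_pow_opWt_le hS)

lemma tailSet_zero_parts {k j s : ℕ} : ∀ p ∈ tailSet k j s, p.1 0 = 0 ∧ p.2 0 = 0 :=
  fun _ hp => hp.1.1 0 (Nat.zero_le _)

/-- The generating function of `tailSet k j s` by weight. -/
noncomputable def tailGf (q : ℂ) (k j s : ℕ) : ℂ :=
  ∑' p, (tailSet k j s).indicator (fun p => q ^ opWt p) p

lemma hasSum_addPart_image (hq : ‖q‖ < 1) (k j f g : ℕ) :
    HasSum ((addPart (j + 1) f g '' tailSet k (j + 1) (f + g)).indicator fun p => q ^ opWt p)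
      (q ^ ((j + 1) * (f + g)) * tailGf q k (j + 1) (f + g)) := by
  have hinj := addPart_injective (j + 1) f g
  have h := ((summable_indicator_pow_opWt hq
    (tailSet_zero_parts (k := k) (j := j + 1) (s := f + g))).hasSum.mul_left
    (q ^ ((j + 1) * (f + g))))
  rw [← tailGf] at h
  refine (hinj.hasSum_iff ?_).mp (h.congr_fun fun p => ?_)
  · intro p hp
    exact Set.indicator_of_notMem (fun h => hp (Set.image_subset_range _ _ h)) _
  · rw [Function.comp]
    by_cases hp : p ∈ tailSet k (j + 1) (f + g)
    · rw [Set.indicator_of_mem hp, Set.indicator_of_mem (Set.mem_image_of_mem _ hp), opWt_addPart,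
        pow_add]
    · rw [Set.indicator_of_notMem hp, Set.indicator_of_notMem (by rwa [hinj.mem_set_image]),
        mul_zero]

lemma tailGf_eq_add_sum (hq : ‖q‖ < 1) {k j s s' : ℕ} (T : Finset (ℕ × ℕ))
    (hT : ∀ x ∈ T, PartCond (j + 1) x.1 x.2)
    (h : ∀ f g, PartCond (j + 1) f g → (s + f + 1 ≤ 2 * k + g ↔
      s' + f + 1 ≤ 2 * k + g ∨ (f, g) ∈ T))
    (hdisj : ∀ x ∈ T, ¬ s' + x.1 + 1 ≤ 2 * k + x.2) :
    tailGf q k j s = tailGf q k j s'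
      + ∑ x ∈ T, q ^ ((j + 1) * (x.1 + x.2)) * tailGf q k (j + 1) (x.1 + x.2) := by
  classical
  have h1 := (summable_indicator_pow_opWt hq
    (tailSet_zero_parts (k := k) (j := j) (s := s'))).hasSum.add
      (hasSum_sum fun x (_ : x ∈ T) => hasSum_addPart_image hq k j x.1 x.2)
  refine Eq.trans (tsum_congr fun p => ?_) h1.tsum_eq
  have hmem : ∀ x ∈ T, (p ∈ addPart (j + 1) x.1 x.2 '' tailSet k (j + 1) (x.1 + x.2)
      ↔ TailCond k j p ∧ (p.1 (j + 1), p.2 (j + 1)) = x) := fun x hx => by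
    rw [mem_addPart_image_tailSet (hT x hx), Prod.ext_iff]
  have hsum : ∑ x ∈ T, (addPart (j + 1) x.1 x.2 '' tailSet k (j + 1) (x.1 + x.2)).indicator
      (fun p => q ^ opWt p) p
      = if TailCond k j p ∧ (p.1 (j + 1), p.2 (j + 1)) ∈ T then q ^ opWt p else 0 := by
    simp only [Set.indicator_apply]
    rw [Finset.sum_congr rfl fun x hx => if_congr (hmem x hx) rfl rfl]
    by_cases hp : TailCond k j p
    · simp only [hp, true_and]
      rw [Finset.sum_ite_eq]
    · simp [hp]
  rw [hsum]
  simp only [Set.indicator_apply, tailSet, Set.mem_ofPred_eq]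
  by_cases hp : TailCond k j p
  · have h2 := h _ _ (hp.2 (j + 1) (Nat.lt_succ_self j)).1
    have h3 := hdisj (p.1 (j + 1), p.2 (j + 1))
    simp only [hp, true_and, h2]
    by_cases h4 : (p.1 (j + 1), p.2 (j + 1)) ∈ T
    · simp [h4, h3 h4]
    · simp [h4]
  · simp [hp]

lemma tailGf_eq_zero (k j : ℕ) : tailGf q k j (2 * k) = 0 := by
  rw [tailGf, ← tsum_zero]
  refine tsum_congr fun p => Set.indicator_of_notMem ?_ _
  rintro ⟨h1, h2⟩
  obtain ⟨h3, h4, h5⟩ := (h1.2 (j + 1) (Nat.lt_succ_self j)).1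
  rcases Nat.even_or_odd (j + 1) with h | h
  · have := h5 h
    rw [Nat.even_iff] at this
    omega
  · have := h4 h
    omega

lemma tailGf_odd_index {k j : ℕ} (hj : Odd j) (c : ℕ) :
    tailGf q k j (2 * c + 1) = tailGf q k j (2 * c) := by
  have : tailSet k j (2 * c + 1) = tailSet k j (2 * c) := by
    ext p
    refine and_congr_right fun h => ?_
    have := (h.2 (j + 1) (Nat.lt_succ_self j)).1.2.2 (by simpa [Nat.even_add_one] using hj)
    rw [Nat.even_iff] at this
    omega
  rw [tailGf, this, tailGf]

/-- The factor `1 + q ^ (j + 1)` for even `j`, and `1` for odd `j`. -/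
noncomputable def oddFactor (q : ℂ) (j : ℕ) : ℂ := if Even j then 1 + q ^ (j + 1) else 1

lemma tailGf_sub (hq : ‖q‖ < 1) (j b c : ℕ) :
    tailGf q (b + 1 + c) j (2 * c) - tailGf q (b + 1 + c) j (2 * (c + 1))
      = oddFactor q j * ((q ^ 2) ^ ((j + 1) * b) * (tailGf q (b + 1 + c) (j + 1) (2 * b)
        + (q ^ 2) ^ (j + 1) * tailGf q (b + 1 + c) (j + 1) (2 * (b + 1)))) := by
  rw [sub_eq_iff_eq_add']
  rcases Nat.even_or_odd j with hj | hj
  · have hj1 : Odd (j + 1) := hj.add_one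
    have hj2 : ¬ Even (j + 1) := Nat.not_even_iff_odd.mpr hj1
    rw [tailGf_eq_add_sum hq (s' := 2 * (c + 1))
      {(2 * b, 0), (2 * b + 1, 0), (2 * b + 1, 1), (2 * b + 2, 1)}]
    · rw [Finset.sum_insert (by simp), Finset.sum_insert (by simp), Finset.sum_insert (by simp),
        Finset.sum_singleton]
      simp only [add_zero]
      rw [show 2 * b + 1 + 1 = 2 * (b + 1) by ring,
        tailGf_odd_index hj1, tailGf_odd_index hj1, oddFactor, if_pos hj]
      ring
    · simp [PartCond, hj2]
    · rintro f g ⟨h1, h2, -⟩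
      have := h2 hj1
      simp only [Finset.mem_insert, Finset.mem_singleton, Prod.mk.injEq]
      omega
    · simp only [Finset.mem_insert, Finset.mem_singleton, forall_eq_or_imp, forall_eq]
      omega
  · have hj1 : Even (j + 1) := hj.add_one
    have hj2 : ¬ Odd (j + 1) := Nat.not_odd_iff_even.mpr hj1
    rw [tailGf_eq_add_sum hq (s' := 2 * (c + 1)) {(2 * b, 0), (2 * b + 1, 1)}]
    · rw [Finset.sum_insert (by simp), Finset.sum_singleton]
      simp only [add_zero]
      rw [show 2 * b + 1 + 1 = 2 * (b + 1) by ring, oddFactor,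
        if_neg (Nat.not_even_iff_odd.mpr hj)]
      ring
    · simp [PartCond, hj2, Nat.even_add_one]
    · rintro f g ⟨h1, -, h2⟩
      have := h2 hj1
      rw [Nat.even_iff] at this
      simp only [Finset.mem_insert, Finset.mem_singleton, Prod.mk.injEq]
      omega
    · simp only [Finset.mem_insert, Finset.mem_singleton, forall_eq_or_imp, forall_eq]
      omega

lemma tendsto_tailGf (hq : ‖q‖ < 1) {k c : ℕ} (hc : c < k) :
    Tendsto (fun j => tailGf q k j (2 * c)) atTop (𝓝 1) := by
  classical
  have h : Tendsto (fun j => tailGf q k j (2 * c)) atTop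
      (𝓝 (∑' p : (ℕ →₀ ℕ) × (ℕ →₀ ℕ), if p = 0 then (1 : ℂ) else 0)) := by
    refine tendsto_tsum_of_dominated_convergence (summable_weight_bound hq) (fun p => ?_)
      (Eventually.of_forall fun j p => norm_indicator_pow_opWt_le tailSet_zero_parts p)
    refine tendsto_const_nhds.congr' ?_
    split_ifs with hp
    · subst hp
      refine Eventually.of_forall fun j => ?_
      have : (0 : (ℕ →₀ ℕ) × (ℕ →₀ ℕ)) ∈ tailSet k j (2 * c) := by
        refine ⟨⟨fun _ _ => by simp, fun _ _ => ⟨by simp [PartCond], ?_⟩⟩, ?_⟩ <;>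
          simp only [Prod.fst_zero, Prod.snd_zero, Finsupp.coe_zero, Pi.zero_apply] <;> omega
      dsimp only [tailGf]
      rw [Set.indicator_of_mem this]
      simp [opWt]
    · obtain ⟨i, hi⟩ : ∃ i, ¬ (p.1 i = 0 ∧ p.2 i = 0) := by
        by_contra! hcon
        exact hp (Prod.ext (Finsupp.ext fun i => (hcon i).1) (Finsupp.ext fun i => (hcon i).2))
      filter_upwards [eventually_ge_atTop i] with j hj
      exact (Set.indicator_of_notMem (fun h => hi (h.1.1 i hj)) _).symm
  rwa [tsum_ite_eq] at h

lemma tsum_uCount_eq_tailGf (hq : ‖q‖ < 1) {k a : ℕ} (hak : a ≤ k) :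
    ∑' mn : ℕ × ℕ, (uCount 2 (2 * k) (2 * a) mn.1 mn.2 : ℂ) * q ^ mn.2
      = tailGf q k 0 (2 * (k - a)) := by
  have h1 := (summable_indicator_pow_opWt hq
    (tailSet_zero_parts (k := k) (j := 0) (s := 2 * (k - a)))).hasSum.tsum_fiberwise
      fun p => (opParts p, opWt p)
  refine Eq.trans (tsum_congr fun mn => ?_) h1.tsum_eq
  obtain ⟨m, n⟩ := mn
  set S := {p : (ℕ →₀ ℕ) × (ℕ →₀ ℕ) |
    IsOverPtn p ∧ opParts p = m ∧ opWt p = n ∧ uCond 2 (2 * k) (2 * a) p} with hS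
  have h2 : ∑' _ : S, q ^ n = (uCount 2 (2 * k) (2 * a) m n : ℂ) * q ^ n := by
    rw [tsum_const, nsmul_eq_mul]; rfl
  rw [← h2, tsum_subtype S fun _ => q ^ n,
    tsum_subtype ((fun p => (opParts p, opWt p)) ⁻¹' {(m, n)})]
  refine tsum_congr fun p => ?_
  have h3 : p ∈ S ↔ p ∈ tailSet k 0 (2 * (k - a)) ∧
      p ∈ (fun p => (opParts p, opWt p)) ⁻¹' {(m, n)} := by
    rw [← setOf_uCond_eq_tailSet hak]
    simp only [hS, Set.mem_ofPred_eq, Set.mem_preimage, Set.mem_singleton_iff, Prod.mk.injEq]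
    tauto
  by_cases hf : p ∈ (fun p => (opParts p, opWt p)) ⁻¹' {(m, n)}
  · rw [Set.indicator_of_mem hf]
    by_cases ht : p ∈ tailSet k 0 (2 * (k - a))
    · rw [Set.indicator_of_mem (h3.mpr ⟨ht, hf⟩), Set.indicator_of_mem ht]
      rw [(Prod.mk.inj hf).2]
    · rw [Set.indicator_of_notMem fun h => ht (h3.mp h).1, Set.indicator_of_notMem ht]
  · rw [Set.indicator_of_notMem fun h => hf (h3.mp h).2, Set.indicator_of_notMem hf]

end Overpartitions

section Product

variable {q : ℂ}

lemma norm_sq_lt_one (hq : ‖q‖ < 1) : ‖q ^ 2‖ < 1 := by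
  rw [norm_pow]; exact pow_lt_one₀ (norm_nonneg _) hq two_ne_zero

lemma multipliable_oddFactor (hq : ‖q‖ < 1) : Multipliable (oddFactor q) := by
  refine Multipliable.even_mul_odd ?_ ?_
  · refine (multipliable_qPochInf (norm_sq_lt_one hq) (-q)).congr fun j => ?_
    rw [oddFactor, if_pos (even_two_mul j)]
    ring
  · refine multipliable_one.congr fun j => ?_
    rw [oddFactor, if_neg (by simp)]

lemma tprod_oddFactor_mul_qPochInf (hq : ‖q‖ < 1) :
    (∏' j, oddFactor q j) * qPochInf (-q ^ 2) (q ^ 2) = qPochInf (-q) q := by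
  have hq2 := norm_sq_lt_one hq
  have e1 : ∀ j : ℕ, oddFactor q (2 * j) = 1 - -q * (q ^ 2) ^ j := fun j => by
    rw [oddFactor, if_pos (even_two_mul j)]; ring
  have e2 : ∀ j : ℕ, oddFactor q (2 * j + 1) = 1 := fun j => by
    rw [oddFactor, if_neg (by simp)]
  have e3 : ∀ j : ℕ, 1 - -q * (q ^ 2) ^ j = 1 - -q * q ^ (2 * j) := fun j => by rw [pow_mul]
  have e4 : ∀ j : ℕ, 1 - -q ^ 2 * (q ^ 2) ^ j = 1 - -q * q ^ (2 * j + 1) := fun j => by ring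
  have m1 := multipliable_qPochInf hq2 (-q)
  have m2 := multipliable_qPochInf hq2 (-q ^ 2)
  rw [← tprod_even_mul_odd (by simpa only [e1] using m1)
    (by simpa only [e2] using multipliable_one)]
  simp only [e1, e2, tprod_one, mul_one]
  simp only [e3] at m1 ⊢
  simp only [qPochInf, e4] at m2 ⊢
  exact tprod_even_mul_odd (f := fun j => 1 - -q * q ^ j) m1 m2

lemma tailGf_eq_andrewsSeries (hq : ‖q‖ < 1) {k b : ℕ} (hb : b ≤ k) :
    tailGf q k 0 (2 * (k - b)) = (∏' j, oddFactor q j)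
      * (qPochInf (-q ^ 2) (q ^ 2) / qPochInf (q ^ 2) (q ^ 2))
      * andrewsSeries (q ^ 2) 0 b (k - b) := by
  have hq2 := norm_sq_lt_one hq
  have hP := (multipliable_oddFactor hq).hasProd.tendsto_prod_nat
  set P := ∏' j, oddFactor q j
  set ρ := qPochInf (-q ^ 2) (q ^ 2) / qPochInf (q ^ 2) (q ^ 2) with hρ
  let D : ℕ → ℕ → ℂ := fun j b =>
    (∏ i ∈ Finset.range j, oddFactor q i) * tailGf q k j (2 * (k - b))
      - P * ρ * andrewsSeries (q ^ 2) j b (k - b)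
  have hD0 : ∀ j, D j 0 = 0 := fun j => by
    simp only [D]
    rw [Nat.sub_zero, tailGf_eq_zero, andrewsSeries_zero, mul_zero, mul_zero, sub_zero]
  have key : D 0 b = 0 := by
    refine eq_zero_of_gordon_recurrence (norm_nonneg (q ^ 2)) hq2
      (z := fun j => (q ^ 2) ^ (j + 1)) (fun j => (norm_pow _ _).le) hD0 (fun j b hb => ?_)
      (fun b hb => ?_) 0 hb
    · obtain ⟨c, rfl⟩ := Nat.exists_eq_add_of_le hb
      have s1 : b + 1 + c - b = c + 1 := by omega
      have s2 : b + 1 + c - (b + 1) = c := by omega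
      have s3 : b + 1 + c - (c + 1) = b := by omega
      have s4 : b + 1 + c - c = b + 1 := by omega
      have h1 := tailGf_sub hq j b c
      have h2 := andrewsSeries_sub hq2 j b c
      simp only [D, s1, s2, s3, s4]
      rw [Finset.prod_range_succ, ← pow_mul]
      linear_combination (∏ i ∈ Finset.range j, oddFactor q i) * h1 - P * ρ * h2
    · rcases Nat.eq_zero_or_pos b with rfl | hb0
      · simp only [hD0]; exact tendsto_const_nhds
      · have h1 := hP.mul (tendsto_tailGf hq (show k - b < k by omega))
        have h2 := (tendsto_andrewsSeries hq2 (k - b) hb0).const_mul (P * ρ)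
        have h3 := h1.sub h2
        rw [← hρ, mul_assoc, mul_inv_cancel₀ (qRatio_limit_ne_zero hq2), sub_self] at h3
        exact h3
  simpa [D, sub_eq_zero] using key

end Product

end

/-- Sang–Shi–Yee (Theorem 1.12, even case): for `1 ≤ a ≤ k`,
`Σ_{n ≥ 0} U_{2k, 2a}(n) q^n
  = (−q; q)_∞ (q^{2a}, q^{4k-2a}, q^{4k}; q^{4k})_∞ / (q^2; q^2)_∞`,
where `U_{2k, 2a}(n)` counts overpartitions of `n` satisfying the parity conditions
(i)-(iv) with `d = 2`, summed here over all numbers of parts `m`. -/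
theorem sang_shi_yee_even (k a : ℕ) (hk : 1 ≤ k) (ha : 1 ≤ a) (hak : a ≤ k)
    (q : ℂ) (hq : ‖q‖ < 1) :
    (∑' mn : ℕ × ℕ, (uCount 2 (2 * k) (2 * a) mn.1 mn.2 : ℂ) * q ^ mn.2)
      = qPochInf (-q) q * qPochInf (q ^ (2 * a)) (q ^ (4 * k))
        * qPochInf (q ^ (4 * k - 2 * a)) (q ^ (4 * k))
        * qPochInf (q ^ (4 * k)) (q ^ (4 * k)) / qPochInf (q ^ 2) (q ^ 2) := by
  obtain ⟨c, rfl⟩ := Nat.exists_eq_add_of_le hak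
  have hq2 := norm_sq_lt_one hq
  rw [tsum_uCount_eq_tailGf hq hak, tailGf_eq_andrewsSeries hq hak,
    andrewsSeries_level_zero hq2 _ ha, ← tprod_oddFactor_mul_qPochInf hq, Nat.add_sub_cancel_left,
    show 4 * (a + c) - 2 * a = 2 * (a + 2 * c) by omega,
    show 4 * (a + c) = 2 * (2 * (a + c)) by ring]
  simp only [pow_mul]
  ring
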